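/- arXiv:2003.10389 — 2 statements merged into one kernel-verified Lean document; each statement's English description precedes it below -/
import Mathlib

section
/- Let δ>0 and s ∈ (0,1). The function r ↦ G_δ(s,r) is twice differentiable on (s,1), and for every r ∈ (s,1), with z = z(s,r) = s(1−r)/(r(1−s)), one has d²/dr² G_δ(s,r) = −(K(δ)/4) · (r−s)^{δ/2−1} · s^{1/2} · (1−r)^{−3/2} · r^{−(δ+1)/2} · (1−s)^{(3−δ)/2} · ₂F₁((δ+1)/2,(δ−3)/2,δ/2,z). -/
open MeasureTheory Real Filter

/-- Ascending Pochhammer symbol `(a)_k = a(a+1)⋯(a+k-1)`. -/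
noncomputable def poch (a : ℝ) (k : ℕ) : ℝ := ∏ i ∈ Finset.range k, (a + i)

/-- Gauss hypergeometric function `₂F₁(a,b,c,z) = ∑ (a)_k (b)_k / (k! (c)_k) z^k`. -/
noncomputable def hyp2F1 (a b c z : ℝ) : ℝ :=
  ∑' k : ℕ, (poch a k * poch b k) / ((Nat.factorial k : ℝ) * poch c k) * z ^ k

/-- `K(δ) = 2 Γ((δ+1)/2)² / Γ(δ/2)²`. -/
noncomputable def Kcoef (δ : ℝ) : ℝ :=
  2 * Real.Gamma ((δ + 1) / 2) ^ 2 / Real.Gamma (δ / 2) ^ 2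

/-- Two-point kernel `G_δ(s,r)`, equal to the second moment `E^δ[X_s X_r]` of a
δ-dimensional Bessel bridge from 0 to 0 over [0,1]. -/
noncomputable def twoPt (δ s r : ℝ) : ℝ :=
  if s < r then
    Kcoef δ * (r - s) ^ (δ / 2 + 1) * (s * (1 - r)) ^ ((1 : ℝ) / 2) *
      (r * (1 - s)) ^ (-((δ + 1) / 2)) *
      hyp2F1 ((δ + 1) / 2) ((δ + 1) / 2) (δ / 2) (s * (1 - r) / (r * (1 - s)))
  else
    Kcoef δ * (s - r) ^ (δ / 2 + 1) * (r * (1 - s)) ^ ((1 : ℝ) / 2) *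
      (s * (1 - r)) ^ (-((δ + 1) / 2)) *
      hyp2F1 ((δ + 1) / 2) ((δ + 1) / 2) (δ / 2) (r * (1 - s) / (s * (1 - r)))

/-- Coefficient `D(s,r)`. -/
noncomputable def Dcoef (s r : ℝ) : ℝ :=
  if s < r then (1 - s) / ((r - s) * (1 - r)) else s / (r * (s - r))

/-- Coefficient `C_k = Γ(k+(δ+1)/2)/(Γ(δ/2) Γ(k+δ/2) k!)`. -/
noncomputable def Ccoef (δ : ℝ) (k : ℕ) : ℝ :=
  Real.Gamma ((k : ℝ) + (δ + 1) / 2) /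
    (Real.Gamma (δ / 2) * Real.Gamma ((k : ℝ) + δ / 2) * (Nat.factorial k : ℝ))

/-- Coefficient `f_k(s,r)`. -/
noncomputable def fcoef (s r : ℝ) (k : ℕ) : ℝ :=
  if s < r then (2 * (r - s)) ^ ((1 : ℝ) / 2 - (k : ℝ)) * (s / r) ^ ((k : ℝ) + 1 / 2)
  else (2 * (s - r)) ^ ((1 : ℝ) / 2 - (k : ℝ)) * ((1 - s) / (1 - r)) ^ ((k : ℝ) + 1 / 2)

/-- `Σ^δ_{r,s}(b) = Σ^δ_r(X_s | b)`, the density-weighted conditional expectation of a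
δ-dimensional Bessel bridge. -/
noncomputable def SigmaRS (δ r s b : ℝ) : ℝ :=
  ((2 : ℝ) ^ (δ / 2 - 1) * (r * (1 - r)) ^ (δ / 2))⁻¹ *
    Real.exp (-(Dcoef s r) * b ^ 2 / 2) *
    ∑' k : ℕ, Ccoef δ k * fcoef s r k * b ^ (2 * k)

/-!
Put `u_a(z) = z ^ (c - a) (1 - z) ^ (a + b - c) F(a, b; c; z)`. The contiguous relation expressing
`z (1 - z) F'(a, b; c; z)` through `F(a - 1, b; c; z)` and `F(a, b; c; z)` says that
differentiation lowers `a`: `z² u_a' = (c - a) u_{a - 1}`. For `a = b = (δ + 1) / 2` and `c = δ / 2`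
one has `G_δ(s, r) = K(δ) s (1 - r) u_a(z(s, r))`, and on differentiating twice in `r` the terms in
`u_{a - 1}` cancel, leaving a multiple of `u_{a - 2}(z(s, r))`.
-/

open scoped Topology

section PowerSeries

variable {𝕜 E F : Type*} [NontriviallyNormedField 𝕜] [NormedAddCommGroup E] [NormedSpace 𝕜 E]
  [NormedAddCommGroup F] [NormedSpace 𝕜 F] [CompleteSpace F]

theorem hasSum_nsmul_fderiv_apply_self {f : E → F} {p : FormalMultilinearSeries 𝕜 E F}
    {R : ENNReal} {x y : E} (hf : HasFPowerSeriesOnBall f p x R) (hy : y ∈ Metric.eball 0 R) :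
    HasSum (fun n : ℕ => n • p n fun _ => y) (fderiv 𝕜 f (x + y) y) := by
  have hderiv := (hf.fderiv.hasSum hy).mapL (ContinuousLinearMap.apply 𝕜 F y)
  refine (hasSum_nat_add_iff' 1).1 ?_
  simpa only [ContinuousLinearMap.apply_apply,
    FormalMultilinearSeries.derivSeries_apply_diag, Finset.sum_range_one, zero_smul, sub_zero]
    using hderiv

end PowerSeries

theorem ascPochhammer_succ_eval_sub_one {R : Type*} [CommRing R] (a : R) (n : ℕ) :
    (ascPochhammer R (n + 1)).eval (a - 1) = (a - 1) * (ascPochhammer R n).eval a := by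
  simp [ascPochhammer_succ_left]

theorem ascPochhammer_eval_ne_zero {R : Type*} [CommRing R] [IsDomain R] {c : R}
    (hc : ∀ k : ℕ, c ≠ -k) (n : ℕ) : (ascPochhammer R n).eval c ≠ 0 := by
  rw [Ne, ascPochhammer_eval_eq_zero_iff]
  rintro ⟨k, -, hk⟩
  exact hc k (by rw [hk, neg_neg])

theorem ordinaryHypergeometricCoefficient_sub_one_succ {𝕜 : Type*} [Field 𝕜] [CharZero 𝕜]
    (a b : 𝕜) {c : 𝕜} (hc : ∀ k : ℕ, c ≠ -k) (n : ℕ) :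
    (c - a) * ordinaryHypergeometricCoefficient (a - 1) b c (n + 1) =
      (n + 1 + c - a) * ordinaryHypergeometricCoefficient a b c (n + 1) -
        (n + b) * ordinaryHypergeometricCoefficient a b c n := by
  have hpoch := ascPochhammer_eval_ne_zero hc n
  have hcn : c + n ≠ 0 := fun h => hc n (eq_neg_of_add_eq_zero_left h)
  simp only [ordinaryHypergeometricCoefficient, ascPochhammer_succ_eval_sub_one]
  simp only [ascPochhammer_succ_eval, Nat.factorial_succ]
  push_cast
  field_simp
  ring

theorem ordinaryHypergeometric_symm {𝕜 𝔸 : Type*} [Field 𝕜] [Ring 𝔸] [Algebra 𝕜 𝔸]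
    [TopologicalSpace 𝔸] [IsTopologicalRing 𝔸] (a b c : 𝕜) (z : 𝔸) :
    ₂F₁ a b c z = ₂F₁ b a c z := by
  rw [ordinaryHypergeometric, ordinaryHypergeometricSeries_symm, ordinaryHypergeometric]

section Hypergeometric

variable {𝕜 : Type*} [RCLike 𝕜]

theorem one_le_radius_ordinaryHypergeometricSeries (a b : 𝕜) {c : 𝕜} (hc : ∀ k : ℕ, c ≠ -k) :
    1 ≤ (ordinaryHypergeometricSeries 𝕜 a b c).radius := by
  by_cases ha : ∃ k : ℕ, a = -k
  · obtain ⟨k, rfl⟩ := ha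
    exact le_top.trans_eq (ordinaryHypergeometric_radius_top_of_neg_nat₁ 𝕜 b c).symm
  by_cases hb : ∃ k : ℕ, b = -k
  · obtain ⟨k, rfl⟩ := hb
    exact le_top.trans_eq (ordinaryHypergeometric_radius_top_of_neg_nat₂ 𝕜 a c).symm
  push Not at ha hb
  refine (ordinaryHypergeometricSeries_radius_eq_one 𝕜 a b c fun k => ?_).ge
  exact ⟨fun h => ha k (by rw [h, neg_neg]), fun h => hb k (by rw [h, neg_neg]),
    fun h => hc k (by rw [h, neg_neg])⟩

theorem hasFPowerSeriesOnBall_ordinaryHypergeometric (a b : 𝕜) {c : 𝕜} (hc : ∀ k : ℕ, c ≠ -k) :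
    HasFPowerSeriesOnBall (₂F₁ a b c : 𝕜 → 𝕜) (ordinaryHypergeometricSeries 𝕜 a b c) 0 1 :=
  have hradius := one_le_radius_ordinaryHypergeometricSeries a b hc
  (FormalMultilinearSeries.hasFPowerSeriesOnBall _ (one_pos.trans_le hradius)).mono one_pos hradius

theorem hasSum_ordinaryHypergeometric (a b : 𝕜) {c z : 𝕜} (hc : ∀ k : ℕ, c ≠ -k) (hz : ‖z‖ < 1) :
    HasSum (fun n => ordinaryHypergeometricCoefficient a b c n * z ^ n) (₂F₁ a b c z) := by
  have hsum := (hasFPowerSeriesOnBall_ordinaryHypergeometric a b hc).hasSum (y := z)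
    (by simpa [← ofReal_norm] using hz)
  simpa only [ordinaryHypergeometricSeries_apply_eq, smul_eq_mul, zero_add] using hsum

theorem hasSum_mul_deriv_ordinaryHypergeometric (a b : 𝕜) {c z : 𝕜} (hc : ∀ k : ℕ, c ≠ -k)
    (hz : ‖z‖ < 1) :
    HasSum (fun n : ℕ => n * (ordinaryHypergeometricCoefficient a b c n * z ^ n))
      (z * deriv (₂F₁ a b c : 𝕜 → 𝕜) z) := by
  have hsum := hasSum_nsmul_fderiv_apply_self (y := z)
    (hasFPowerSeriesOnBall_ordinaryHypergeometric a b hc) (by simpa [← ofReal_norm] using hz)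
  simpa only [ordinaryHypergeometricSeries_apply_eq, nsmul_eq_mul, zero_add,
    fderiv_eq_smul_deriv, smul_eq_mul] using hsum

theorem differentiableAt_ordinaryHypergeometric (a b : 𝕜) {c z : 𝕜} (hc : ∀ k : ℕ, c ≠ -k)
    (hz : ‖z‖ < 1) : DifferentiableAt 𝕜 (₂F₁ a b c : 𝕜 → 𝕜) z :=
  ((hasFPowerSeriesOnBall_ordinaryHypergeometric a b hc).analyticAt_of_mem
    (by simpa [← ofReal_norm] using hz)).differentiableAt

theorem mul_deriv_ordinaryHypergeometric (a b : 𝕜) {c z : 𝕜} (hc : ∀ k : ℕ, c ≠ -k)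
    (hz : ‖z‖ < 1) :
    z * (1 - z) * deriv (₂F₁ a b c : 𝕜 → 𝕜) z =
      (c - a) * ₂F₁ (a - 1) b c z + (a - c + b * z) * ₂F₁ a b c z := by
  have hF := hasSum_ordinaryHypergeometric a b hc hz
  have hF' := hasSum_mul_deriv_ordinaryHypergeometric a b hc hz
  have hlow := hasSum_ordinaryHypergeometric (a - 1) b hc hz
  have hlow_tail := ((hasSum_nat_add_iff' 1).2 hlow).mul_left (c - a)
  have htail := (((hasSum_nat_add_iff' 1).2 hF').add
    (((hasSum_nat_add_iff' 1).2 hF).mul_left (c - a))).sub ((hF'.add (hF.mul_left b)).mul_left z)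
  have hsums := hlow_tail.unique <| htail.congr_fun fun n => by
    push_cast
    linear_combination z ^ (n + 1) * ordinaryHypergeometricCoefficient_sub_one_succ a b hc n
  simp only [Finset.range_one, Finset.sum_singleton, ordinaryHypergeometricCoefficient,
    Nat.factorial_zero, Nat.cast_zero, Nat.cast_one, inv_one, ascPochhammer_zero,
    Polynomial.eval_one, mul_one, pow_zero, sub_zero] at hsums
  linear_combination -hsums

end Hypergeometric

section WeightedHypergeometric

/-- The hypergeometric function `F(a, b; c; z)` with the weight `z ^ (c - a) (1 - z) ^ (a + b - c)`,
for which differentiation lowers `a` by one. The real powers restrict its use to `0 < z < 1`. -/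
noncomputable def weightedHypergeometric (a b c z : ℝ) : ℝ :=
  z ^ (c - a) * (1 - z) ^ (a + b - c) * ₂F₁ a b c z

theorem hasDerivAt_weightedHypergeometric (a b : ℝ) {c z : ℝ} (hc : ∀ k : ℕ, c ≠ -k)
    (hz : z ∈ Set.Ioo 0 1) :
    HasDerivAt (weightedHypergeometric a b c)
      ((c - a) / z ^ 2 * weightedHypergeometric (a - 1) b c z) z := by
  obtain ⟨hz₀, hz₁⟩ := hz
  have hz₁' : 0 < 1 - z := sub_pos.2 hz₁
  have hnorm : ‖z‖ < 1 := by rwa [norm_of_nonneg hz₀.le]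
  have hpow := (hasDerivAt_id z).rpow_const (p := c - a) (.inl hz₀.ne')
  have hpow' := ((hasDerivAt_id z).const_sub 1).rpow_const (p := a + b - c) (.inl hz₁'.ne')
  have hF := (differentiableAt_ordinaryHypergeometric a b hc hnorm).hasDerivAt
  refine ((hpow.mul hpow').mul hF).congr_deriv ?_
  have hraise : z ^ (c - (a - 1)) = z ^ (c - a) * z := by
    rw [← rpow_add_one hz₀.ne']
    ring_nf
  have hlower : (1 - z) ^ (a - 1 + b - c) = (1 - z) ^ (a + b - c) / (1 - z) := by
    rw [← rpow_sub_one hz₁'.ne']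
    ring_nf
  simp only [weightedHypergeometric, id_eq, Pi.mul_apply, hraise, hlower,
    rpow_sub_one hz₀.ne', rpow_sub_one hz₁'.ne']
  field_simp
  linear_combination mul_deriv_ordinaryHypergeometric a b hc hnorm

end WeightedHypergeometric

section CrossRatio

/-- The variable `z(s, r)` of the kernel, which is the cross-ratio of `0`, `1`, `s` and `r`. -/
noncomputable def crossRatio (s r : ℝ) : ℝ := s * (1 - r) / (r * (1 - s))

variable {s r : ℝ}

theorem one_sub_crossRatio (hs : s ≠ 1) (hr : r ≠ 0) :
    1 - crossRatio s r = (r - s) / (r * (1 - s)) := by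
  have hs' : 1 - s ≠ 0 := sub_ne_zero.2 hs.symm
  unfold crossRatio
  field_simp
  ring

theorem crossRatio_mem_Ioo (hs : 0 < s) (hr : r ∈ Set.Ioo s 1) :
    crossRatio s r ∈ Set.Ioo 0 1 := by
  have hr₀ : 0 < r := hs.trans hr.1
  have hs₁ : 0 < 1 - s := sub_pos.2 (hr.1.trans hr.2)
  refine ⟨div_pos (mul_pos hs (sub_pos.2 hr.2)) (mul_pos hr₀ hs₁), ?_⟩
  rw [← sub_pos, one_sub_crossRatio (hr.1.trans hr.2).ne hr₀.ne']
  exact div_pos (sub_pos.2 hr.1) (mul_pos hr₀ hs₁)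

theorem hasDerivAt_crossRatio (s : ℝ) (hr : r ≠ 0) :
    HasDerivAt (crossRatio s) (-(s / (1 - s) / r ^ 2)) r := by
  have hinv := ((hasDerivAt_inv hr).sub_const 1).const_mul (s / (1 - s))
  refine (hinv.congr_of_eventuallyEq ?_).congr_deriv (by ring)
  filter_upwards [isOpen_ne.mem_nhds hr] with x hx
  rw [crossRatio, mul_comm x, ← div_mul_div_comm, sub_div, div_self hx, one_div]

theorem hasDerivAt_weightedHypergeometric_crossRatio (a b : ℝ) {c : ℝ} (hc : ∀ k : ℕ, c ≠ -k)
    (hs : 0 < s) (hr : r ∈ Set.Ioo s 1) :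
    HasDerivAt (fun x => weightedHypergeometric a b c (crossRatio s x))
      ((a - c) * (1 - s) / s / (1 - r) ^ 2 *
        weightedHypergeometric (a - 1) b c (crossRatio s r)) r := by
  have hr₀ : r ≠ 0 := (hs.trans hr.1).ne'
  have hr₁ : 1 - r ≠ 0 := (sub_pos.2 hr.2).ne'
  have hs₁ : 1 - s ≠ 0 := (sub_pos.2 (hr.1.trans hr.2)).ne'
  refine ((hasDerivAt_weightedHypergeometric a b hc (crossRatio_mem_Ioo hs hr)).comp r
    (hasDerivAt_crossRatio s hr₀)).congr_deriv ?_
  generalize weightedHypergeometric (a - 1) b c (crossRatio s r) = u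
  unfold crossRatio
  field_simp
  ring

theorem hasDerivAt_one_sub_mul_weightedHypergeometric (a b : ℝ) {c : ℝ} (hc : ∀ k : ℕ, c ≠ -k)
    (hs : 0 < s) (hr : r ∈ Set.Ioo s 1) :
    HasDerivAt (fun x => (1 - x) * weightedHypergeometric a b c (crossRatio s x))
      ((a - c) * (1 - s) / s * weightedHypergeometric (a - 1) b c (crossRatio s r) / (1 - r) -
        weightedHypergeometric a b c (crossRatio s r)) r := by
  have hr₁ : 1 - r ≠ 0 := (sub_pos.2 hr.2).ne'
  refine (((hasDerivAt_id r).const_sub 1).mul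
    (hasDerivAt_weightedHypergeometric_crossRatio a b hc hs hr)).congr_deriv ?_
  simp only [id_eq]
  field_simp
  ring

theorem hasDerivAt_deriv_one_sub_mul_weightedHypergeometric (a b : ℝ) {c : ℝ}
    (hc : ∀ k : ℕ, c ≠ -k) (hs : 0 < s) (hr : r ∈ Set.Ioo s 1) :
    HasDerivAt (deriv fun x => (1 - x) * weightedHypergeometric a b c (crossRatio s x))
      ((a - c) * (a - 1 - c) * ((1 - s) / s) ^ 2 / (1 - r) ^ 3 *
        weightedHypergeometric (a - 2) b c (crossRatio s r)) r := by
  have hr₁ : 1 - r ≠ 0 := (sub_pos.2 hr.2).ne'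
  have hlower := hasDerivAt_weightedHypergeometric_crossRatio (a - 1) b hc hs hr
  rw [show a - 1 - 1 = a - 2 by ring] at hlower
  have hfirst : (deriv fun x => (1 - x) * weightedHypergeometric a b c (crossRatio s x)) =ᶠ[𝓝 r]
      fun x => (a - c) * (1 - s) / s * weightedHypergeometric (a - 1) b c (crossRatio s x) /
        (1 - x) - weightedHypergeometric a b c (crossRatio s x) := by
    filter_upwards [isOpen_Ioo.mem_nhds hr] with x hx
    exact (hasDerivAt_one_sub_mul_weightedHypergeometric a b hc hs hx).deriv
  refine HasDerivAt.congr_of_eventuallyEq ?_ hfirst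
  refine (((hlower.const_mul ((a - c) * (1 - s) / s)).div ((hasDerivAt_id r).const_sub 1) hr₁).sub
    (hasDerivAt_weightedHypergeometric_crossRatio a b hc hs hr)).congr_deriv ?_
  simp only [id_eq]
  field_simp
  ring

theorem weightedHypergeometric_crossRatio (a b c : ℝ) (hs : 0 < s) (hr : r ∈ Set.Ioo s 1) :
    weightedHypergeometric a b c (crossRatio s r) =
      s ^ (c - a) * (1 - r) ^ (c - a) * (r - s) ^ (a + b - c) * r ^ (-b) * (1 - s) ^ (-b) *
        ₂F₁ a b c (crossRatio s r) := by
  have hr₀ : 0 < r := hs.trans hr.1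
  have hr₁ : 0 < 1 - r := sub_pos.2 hr.2
  have hrs : 0 < r - s := sub_pos.2 hr.1
  have hs₁ : 0 < 1 - s := sub_pos.2 (hr.1.trans hr.2)
  have hsplit {x : ℝ} (hx : 0 < x) : x ^ (-b) = (x ^ (c - a))⁻¹ * (x ^ (a + b - c))⁻¹ := by
    rw [← rpow_neg hx.le, ← rpow_neg hx.le, ← rpow_add hx]
    ring_nf
  rw [weightedHypergeometric, one_sub_crossRatio (hr.1.trans hr.2).ne hr₀.ne', hsplit hr₀,
    hsplit hs₁, crossRatio, div_rpow (by positivity) (by positivity),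
    div_rpow hrs.le (by positivity), mul_rpow hs.le hr₁.le, mul_rpow hr₀.le hs₁.le,
    mul_rpow hr₀.le hs₁.le]
  field_simp

end CrossRatio

section Kernel

theorem poch_eq_ascPochhammer_eval (a : ℝ) (n : ℕ) : poch a n = (ascPochhammer ℝ n).eval a := by
  induction n with
  | zero => simp [poch]
  | succ n ih => rw [ascPochhammer_succ_eval, ← ih, poch, poch, Finset.prod_range_succ]

theorem hyp2F1_eq_ordinaryHypergeometric (a b c z : ℝ) : hyp2F1 a b c z = ₂F₁ a b c z := by
  simp only [hyp2F1, ordinaryHypergeometric_eq_tsum, poch_eq_ascPochhammer_eval, smul_eq_mul]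
  refine tsum_congr fun n => ?_
  ring

variable {s r : ℝ}

theorem twoPt_eq_weightedHypergeometric (δ : ℝ) (hs : 0 < s) (hr : r ∈ Set.Ioo s 1) :
    twoPt δ s r = Kcoef δ * s * ((1 - r) *
      weightedHypergeometric ((δ + 1) / 2) ((δ + 1) / 2) (δ / 2) (crossRatio s r)) := by
  have hr₀ : 0 < r := hs.trans hr.1
  have hr₁ : 0 < 1 - r := sub_pos.2 hr.2
  have hs₁ : 0 < 1 - s := sub_pos.2 (hr.1.trans hr.2)
  have hhalf {x : ℝ} (hx : 0 < x) : x ^ ((1 : ℝ) / 2) = x * x ^ (-(1 : ℝ) / 2) := by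
    rw [← rpow_one_add' hx.le (by norm_num)]
    norm_num
  rw [twoPt, if_pos hr.1, hyp2F1_eq_ordinaryHypergeometric,
    weightedHypergeometric_crossRatio _ _ _ hs hr, mul_rpow hs.le hr₁.le,
    mul_rpow hr₀.le hs₁.le, hhalf hs, hhalf hr₁, crossRatio,
    show δ / 2 - (δ + 1) / 2 = -1 / 2 by ring,
    show (δ + 1) / 2 + (δ + 1) / 2 - δ / 2 = δ / 2 + 1 by ring]
  ring

theorem weightedHypergeometric_sub_two_crossRatio (δ : ℝ) (hs : 0 < s) (hr : r ∈ Set.Ioo s 1) :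
    s * ((1 - s) / s) ^ 2 / (1 - r) ^ 3 *
      weightedHypergeometric ((δ + 1) / 2 - 2) ((δ + 1) / 2) (δ / 2) (crossRatio s r) =
    (r - s) ^ (δ / 2 - 1) * s ^ ((1 : ℝ) / 2) * (1 - r) ^ (-(3 : ℝ) / 2) *
      r ^ (-((δ + 1) / 2)) * (1 - s) ^ ((3 - δ) / 2) *
      hyp2F1 ((δ + 1) / 2) ((δ - 3) / 2) (δ / 2) (crossRatio s r) := by
  have hr₁ : 0 < 1 - r := sub_pos.2 hr.2
  have hs₁ : 0 < 1 - s := sub_pos.2 (hr.1.trans hr.2)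
  have hs_pow : s ^ ((3 : ℝ) / 2) = s ^ ((1 : ℝ) / 2) * s := by
    rw [← rpow_add_one hs.ne']
    norm_num
  have hr_pow : (1 - r) ^ ((3 : ℝ) / 2) = (1 - r) ^ (-(3 : ℝ) / 2) * (1 - r) ^ 3 := by
    rw [← rpow_add_natCast hr₁.ne']
    norm_num
  have hs₁_pow : (1 - s) ^ ((3 - δ) / 2) = (1 - s) ^ (-((δ + 1) / 2)) * (1 - s) ^ 2 := by
    rw [← rpow_add_natCast hs₁.ne']
    push_cast
    ring_nf
  rw [weightedHypergeometric_crossRatio _ _ _ hs hr, hyp2F1_eq_ordinaryHypergeometric,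
    ordinaryHypergeometric_symm ((δ + 1) / 2),
    show (δ + 1) / 2 - 2 = (δ - 3) / 2 by ring,
    show δ / 2 - (δ - 3) / 2 = 3 / 2 by ring,
    show (δ - 3) / 2 + (δ + 1) / 2 - δ / 2 = δ / 2 - 1 by ring, hs_pow, hr_pow, hs₁_pow]
  field_simp

end Kernel

theorem twoPt_second_derivative_general (δ : ℝ) (hδ : ∀ k : ℕ, δ / 2 ≠ -k) (s : ℝ)
    (hs : 0 < s) (r : ℝ) (hr : r ∈ Set.Ioo s 1) :
    DifferentiableAt ℝ (fun r => twoPt δ s r) r ∧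
    DifferentiableAt ℝ (deriv (fun r => twoPt δ s r)) r ∧
    deriv (deriv (fun r => twoPt δ s r)) r
      = -(Kcoef δ / 4) * (r - s) ^ (δ / 2 - 1) * s ^ ((1 : ℝ) / 2) *
          (1 - r) ^ (-(3 : ℝ) / 2) * r ^ (-((δ + 1) / 2)) * (1 - s) ^ ((3 - δ) / 2) *
          hyp2F1 ((δ + 1) / 2) ((δ - 3) / 2) (δ / 2) (s * (1 - r) / (r * (1 - s))) := by
  set a := (δ + 1) / 2 with ha
  have hG : (fun r => twoPt δ s r) =ᶠ[𝓝 r] fun r =>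
      Kcoef δ * s * ((1 - r) * weightedHypergeometric a a (δ / 2) (crossRatio s r)) := by
    filter_upwards [isOpen_Ioo.mem_nhds hr] with x hx
    exact twoPt_eq_weightedHypergeometric δ hs hx
  have hfirst := ((hasDerivAt_one_sub_mul_weightedHypergeometric a a hδ hs hr).const_mul
    (Kcoef δ * s)).congr_of_eventuallyEq hG
  have hsecond := ((hasDerivAt_deriv_one_sub_mul_weightedHypergeometric a a hδ hs hr).const_mul
    (Kcoef δ * s)).congr_of_eventuallyEq (hG.deriv.trans (.of_eq (deriv_const_mul_field' _)))
  refine ⟨hfirst.differentiableAt, hsecond.differentiableAt, hsecond.deriv.trans ?_⟩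
  have hlower := weightedHypergeometric_sub_two_crossRatio δ hs hr
  rw [← ha] at hlower
  rw [← crossRatio, show (a - δ / 2) * (a - 1 - δ / 2) = -1 / 4 by rw [ha]; ring]
  linear_combination -(Kcoef δ / 4) * hlower

theorem twoPt_second_derivative (δ : ℝ) (hδ : 0 < δ) (s : ℝ) (hs : s ∈ Set.Ioo (0 : ℝ) 1)
    (r : ℝ) (hr : r ∈ Set.Ioo s 1) :
    DifferentiableAt ℝ (fun r => twoPt δ s r) r ∧
    DifferentiableAt ℝ (deriv (fun r => twoPt δ s r)) r ∧
    deriv (deriv (fun r => twoPt δ s r)) r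
      = -(Kcoef δ / 4) * (r - s) ^ (δ / 2 - 1) * s ^ ((1 : ℝ) / 2) *
          (1 - r) ^ (-(3 : ℝ) / 2) * r ^ (-((δ + 1) / 2)) * (1 - s) ^ ((3 - δ) / 2) *
          hyp2F1 ((δ + 1) / 2) ((δ - 3) / 2) (δ / 2) (s * (1 - r) / (r * (1 - s))) :=
  twoPt_second_derivative_general δ
    (fun k => ((neg_nonpos.2 k.cast_nonneg).trans_lt (half_pos hδ)).ne') s hs.1 r hr
end

section
/- Let δ>0 and let 0<s<r<1. Then ∫₀^∞ b^{δ−1} (d³/db³)Σ^δ_{r,s}(b) db = −(δ−2) · K(δ) · (r−s)^{δ/2−1} · s^{1/2} · (1−r)^{−3/2} · r^{−(δ+1)/2} · (1−s)^{(3−δ)/2} · ₂F₁((δ+1)/2,(δ−3)/2,δ/2, s(1−r)/(r(1−s))). -/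
open MeasureTheory Real Filter

/-!
With `x = b²` and `Σ b = φ (b²)`, the chain rule gives
`∫ b ^ (δ - 1) Σ''' b db = 6 ∫ x ^ (μ - 1) φ'' x dx + 4 ∫ x ^ μ φ''' x dx` for
`μ = (δ + 1) / 2`, and an integration by parts turns this into
`(6 - 4 μ) ∫ x ^ (μ - 1) φ'' x dx`; hence the factor `-(δ - 2)`. Two more integrations by parts
would lead to `∫ x ^ (μ - 3) φ x dx`, which may diverge at `0`. But
`φ x = exp (-p x) ∑ cₖ xᵏ / k!` with `cₖ` growing geometrically at a rate below `p`, so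
`(Γ ν)⁻¹ ∫ x ^ (ν - 1) φ x dx` continues to all real `ν` as `p ^ (-ν) ∑ cₖ (ν)ₖ / k! p⁻ᵏ`, and
for this continuation integration by parts is just Pascal's rule for the coefficients
`(ν)ₖ / k!`. For `Σ` the `cₖ` are proportional to `((δ + 1) / 2)ₖ / (δ / 2)ₖ qᵏ`, so the series
is the hypergeometric one.
-/

open Asymptotics Topology
open scoped Nat

section Pochhammer

lemma poch_succ (a : ℝ) (k : ℕ) : poch a (k + 1) = poch a k * (a + k) :=
  Finset.prod_range_succ _ _

lemma poch_succ_left (a : ℝ) (k : ℕ) : poch a (k + 1) = a * poch (a + 1) k := by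
  rw [poch, Finset.prod_range_succ', mul_comm, Nat.cast_zero, add_zero]
  exact congrArg (a * ·) (Finset.prod_congr rfl fun i _ => by push_cast; ring)

lemma poch_one (k : ℕ) : poch 1 k = k ! := by
  induction k with
  | zero => simp [poch]
  | succ k ih => rw [poch_succ, ih, Nat.factorial_succ]; push_cast; ring

lemma Gamma_natCast_add {a : ℝ} (ha : ∀ m : ℕ, a ≠ -m) (k : ℕ) :
    Gamma (k + a) = Gamma a * poch a k := by
  induction k with
  | zero => simp [poch]
  | succ k ih =>
    have hka : (k : ℝ) + a ≠ 0 := fun h => ha k (by linarith)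
    rw [show ((k + 1 : ℕ) : ℝ) + a = (k + a) + 1 by push_cast; ring, Gamma_add_one hka, ih,
      poch_succ]
    ring

lemma poch_succ_div_factorial (a : ℝ) (k : ℕ) :
    poch a (k + 1) / (k + 1)! = poch (a + 1) (k + 1) / (k + 1)! - poch (a + 1) k / k ! := by
  rw [poch_succ_left a, poch_succ (a + 1), Nat.factorial_succ]
  push_cast
  field_simp
  ring

lemma isBigO_poch_div_poch (a c : ℝ) {ρ : ℝ} (hρ : 1 < ρ) :
    (fun k => poch a k / poch c k) =O[atTop] fun k => ρ ^ k := by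
  have hρ₀ : 0 < ρ := one_pos.trans hρ
  set u : ℕ → ℝ := fun k => poch a k / poch c k / ρ ^ k
  have hratio : Tendsto (fun k : ℕ => |(a + 1 * k) / (c + 1 * k)| / ρ) atTop (𝓝 (1 / ρ)) := by
    simpa using (tendsto_add_mul_div_add_mul_atTop_nhds a c 1 one_ne_zero).abs.div_const ρ
  obtain ⟨σ, hρσ, hσ⟩ := exists_between ((div_lt_one hρ₀).2 hρ)
  have hu : Summable u := by
    refine summable_of_ratio_norm_eventually_le hσ ?_
    filter_upwards [hratio.eventually_le_const hρσ] with k hk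
    have hstep : u (k + 1) = (a + 1 * k) / (c + 1 * k) / ρ * u k := by
      simp only [u, poch_succ, pow_succ, one_mul, div_eq_mul_inv, mul_inv]
      ring
    rw [hstep, norm_mul, norm_div, norm_eq_abs, norm_of_nonneg hρ₀.le]
    gcongr
  refine ((hu.tendsto_atTop_zero.isBigO_one ℝ).mul (isBigO_refl (fun k => ρ ^ k) _)).congr
    (fun k => ?_) fun k => one_mul _
  exact div_mul_cancel₀ _ (pow_pos hρ₀ k).ne'

end Pochhammer

section ExponentialSeries

/-- The exponential generating function `∑ cₖ xᵏ / k!` of a real sequence. -/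
noncomputable def egf (c : ℕ → ℝ) (x : ℝ) : ℝ := ∑' k, c k / k ! * x ^ k

variable {c : ℕ → ℝ} {ρ : ℝ}

lemma isBigO_pow_comp_succ (hc : c =O[atTop] fun k => ρ ^ k) :
    (fun k => c (k + 1)) =O[atTop] fun k => ρ ^ k :=
  (hc.comp_tendsto (tendsto_add_atTop_nat 1)).trans <| by
    simpa [Function.comp_def, pow_succ, mul_comm] using
      (isBigO_refl (fun k => ρ ^ k) atTop).const_mul_left ρ

lemma summable_egf (hc : c =O[atTop] fun k => ρ ^ k) (x : ℝ) :
    Summable fun k => c k / k ! * x ^ k := by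
  refine summable_of_isBigO_nat (summable_pow_div_factorial (ρ * x)) ?_
  refine (hc.mul (isBigO_refl (fun k : ℕ => x ^ k / (k ! : ℝ)) atTop)).congr
    (fun k => ?_) (fun k => ?_)
  · ring
  · rw [mul_pow, mul_div_assoc]

lemma hasDerivAt_egf (hc : c =O[atTop] fun k => ρ ^ k) (x : ℝ) :
    HasDerivAt (egf c) (egf (fun k => c (k + 1)) x) x := by
  set R : ℝ := |x| + 1
  have hsucc : ∀ (k : ℕ) (y : ℝ), c (k + 1) / ((k + 1)! : ℝ) * ((k + 1 : ℕ) * y ^ k)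
      = c (k + 1) / k ! * y ^ k := fun k y => by
    rw [Nat.factorial_succ]; push_cast; field_simp
  have hbound : Summable fun k : ℕ => |c k| / k ! * (k * R ^ (k - 1)) := by
    refine (summable_nat_add_iff 1).1
      ((summable_egf (isBigO_pow_comp_succ hc) R).abs.congr fun k => ?_)
    rw [Nat.add_sub_cancel, ← hsucc, abs_mul, abs_div, Nat.abs_cast,
      abs_of_nonneg (by positivity : 0 ≤ ((k + 1 : ℕ) : ℝ) * R ^ k)]
  have hx : x ∈ Metric.ball (0 : ℝ) R := by simp [R]
  have hderiv := hasDerivAt_tsum_of_isPreconnected (g := fun k y => c k / k ! * y ^ k) hbound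
    Metric.isOpen_ball (convex_ball (0 : ℝ) R).isPreconnected
    (fun k y _ => (hasDerivAt_pow k y).const_mul _) (fun k y hy => ?_) hx (summable_egf hc x) hx
  · refine hderiv.congr_deriv ?_
    rw [((summable_nat_add_iff 1).1 (by
      simpa only [Nat.add_sub_cancel, hsucc] using
        summable_egf (isBigO_pow_comp_succ hc) x)).tsum_eq_zero_add]
    simp only [Nat.cast_zero, zero_mul, mul_zero, zero_add, Nat.add_sub_cancel, hsucc, egf]
  · have hyR : |y| ≤ R := by simpa using (mem_ball_zero_iff.1 hy).le
    rw [norm_mul, norm_mul, norm_div, norm_pow, norm_eq_abs, norm_eq_abs, norm_eq_abs, norm_eq_abs,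
      Nat.abs_cast, Nat.abs_cast]
    gcongr

lemma exists_abs_egf_le (hρ : 0 < ρ) (hc : c =O[atTop] fun k => ρ ^ k) :
    ∃ C, ∀ x, 0 ≤ x → |egf c x| ≤ C * exp (ρ * x) := by
  obtain ⟨C, -, hC⟩ := bound_of_isBigO_nat_atTop hc
  refine ⟨C, fun x hx => ?_⟩
  have hexp : HasSum (fun k : ℕ => C * ((ρ * x) ^ k / k !)) (C * exp (ρ * x)) := by
    rw [exp_eq_exp_ℝ]
    exact (NormedSpace.expSeries_div_hasSum_exp (ρ * x)).mul_left C
  rw [egf, ← norm_eq_abs]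
  refine tsum_of_norm_bounded hexp fun k => ?_
  have hck : |c k| ≤ C * ρ ^ k := by simpa [abs_of_pos hρ] using hC (pow_pos hρ k).ne'
  rw [norm_mul, norm_div, norm_pow, norm_of_nonneg hx, norm_natCast, norm_eq_abs]
  calc |c k| / k ! * x ^ k ≤ C * ρ ^ k / k ! * x ^ k := by gcongr
    _ = C * ((ρ * x) ^ k / k !) := by rw [mul_pow]; ring

/-- The function `exp (-p x) ∑ cₖ xᵏ / k!`; for sequences of geometric growth these form a class
closed under differentiation. -/
noncomputable def dampedEgf (p : ℝ) (c : ℕ → ℝ) (x : ℝ) : ℝ := exp (-(p * x)) * egf c x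

/-- The coefficients of the derivative of `dampedEgf p c`. -/
def dampedShift (p : ℝ) (c : ℕ → ℝ) (k : ℕ) : ℝ := c (k + 1) - p * c k

lemma isBigO_dampedShift (p : ℝ) (hc : c =O[atTop] fun k => ρ ^ k) :
    dampedShift p c =O[atTop] fun k => ρ ^ k :=
  (isBigO_pow_comp_succ hc).sub (hc.const_mul_left p)

lemma egf_dampedShift (p : ℝ) (hc : c =O[atTop] fun k => ρ ^ k) (x : ℝ) :
    egf (dampedShift p c) x = egf (fun k => c (k + 1)) x - p * egf c x := by
  rw [egf, egf, egf, ← tsum_mul_left, ← (summable_egf (isBigO_pow_comp_succ hc) x).tsum_sub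
    ((summable_egf hc x).mul_left p)]
  exact tsum_congr fun k => by rw [dampedShift]; ring

lemma hasDerivAt_dampedEgf (p : ℝ) (hc : c =O[atTop] fun k => ρ ^ k) (x : ℝ) :
    HasDerivAt (dampedEgf p c) (dampedEgf p (dampedShift p c) x) x := by
  have hexp : HasDerivAt (fun x => exp (-(p * x))) (exp (-(p * x)) * -p) x := by
    simpa using ((hasDerivAt_id x).const_mul p).neg.exp
  refine (hexp.mul (hasDerivAt_egf hc x)).congr_deriv ?_
  rw [dampedEgf, egf_dampedShift p hc]
  ring

end ExponentialSeries

section Mellin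

/-- The continuation to all real `μ` of the normalised Mellin transform
`(Γ μ)⁻¹ ∫ x ^ (μ - 1) * dampedEgf p c x` over the positive half-line. -/
noncomputable def regMellin (p : ℝ) (c : ℕ → ℝ) (μ : ℝ) : ℝ :=
  p ^ (-μ) * ∑' k, c k * (poch μ k / k !) / p ^ k

variable {c : ℕ → ℝ} {p ρ μ : ℝ}

lemma summable_regMellin (hρ : 0 < ρ) (hρp : ρ < p) (hc : c =O[atTop] fun k => ρ ^ k) (μ : ℝ) :
    Summable fun k => c k * (poch μ k / k !) / p ^ k := by
  have hp : 0 < p := hρ.trans hρp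
  obtain ⟨σ, hσ₁, hσ⟩ := exists_between ((one_lt_div hρ).2 hρp)
  have : 0 < σ := one_pos.trans hσ₁
  have hlt : ρ * σ / p < 1 := by rwa [div_lt_one hp, ← lt_div_iff₀' hρ]
  have hpoch : (fun k => poch μ k / k !) =O[atTop] fun k => σ ^ k := by
    simpa only [poch_one] using isBigO_poch_div_poch μ 1 hσ₁
  refine summable_of_isBigO_nat (summable_geometric_of_lt_one (by positivity) hlt) ?_
  simpa only [div_pow, mul_pow, inv_pow, div_eq_mul_inv] using
    (hc.mul hpoch).mul (isBigO_refl (fun k => (p ^ k)⁻¹) atTop)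

lemma regMellin_const_mul (p a : ℝ) (c : ℕ → ℝ) (μ : ℝ) :
    regMellin p (fun k => a * c k) μ = a * regMellin p c μ := by
  simp only [regMellin, mul_assoc a, mul_div_assoc a, tsum_mul_left, mul_left_comm]

lemma regMellin_add_one_dampedShift (hρ : 0 < ρ) (hρp : ρ < p) (hc : c =O[atTop] fun k => ρ ^ k)
    (μ : ℝ) : regMellin p (dampedShift p c) (μ + 1) = -regMellin p c μ := by
  have hp : 0 < p := hρ.trans hρp
  have hs := summable_regMellin hρ hρp hc
  have hs' := summable_regMellin hρ hρp (isBigO_pow_comp_succ hc) (μ + 1)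
  have hterm (k : ℕ) : c (k + 1) * (poch μ (k + 1) / (k + 1)!) / p ^ (k + 1) =
      c (k + 1) * (poch (μ + 1) (k + 1) / (k + 1)!) / p ^ (k + 1) -
        c (k + 1) * (poch (μ + 1) k / k !) / p ^ k / p := by
    rw [poch_succ_div_factorial, pow_succ, mul_sub, sub_div, div_div _ (p ^ k)]
  have htsum : ∑' k, c k * (poch μ k / k !) / p ^ k =
      ∑' k, c k * (poch (μ + 1) k / k !) / p ^ k -
        (∑' k, c (k + 1) * (poch (μ + 1) k / k !) / p ^ k) / p := by
    rw [(hs μ).tsum_eq_zero_add, (hs (μ + 1)).tsum_eq_zero_add, tsum_congr hterm,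
      ((summable_nat_add_iff 1).2 (hs (μ + 1))).tsum_sub (hs'.div_const p), tsum_div_const]
    simp only [poch, Finset.range_zero, Finset.prod_empty]
    ring
  have hshift : ∑' k, dampedShift p c k * (poch (μ + 1) k / k !) / p ^ k =
      ∑' k, c (k + 1) * (poch (μ + 1) k / k !) / p ^ k -
        p * ∑' k, c k * (poch (μ + 1) k / k !) / p ^ k := by
    rw [← tsum_mul_left, ← hs'.tsum_sub ((hs (μ + 1)).mul_left p)]
    exact tsum_congr fun k => by rw [dampedShift]; ring
  rw [regMellin, regMellin, hshift, htsum, neg_add, rpow_add hp, rpow_neg_one]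
  field_simp
  ring

lemma integrableOn_rpow_mul_exp_neg_mul (hp : 0 < p) (hμ : 0 < μ) :
    IntegrableOn (fun x => x ^ (μ - 1) * exp (-(p * x))) (Set.Ioi 0) := by
  simpa using integrableOn_rpow_mul_exp_neg_mul_rpow (s := μ - 1) (by linarith) one_pos hp

lemma integrableOn_rpow_mul_dampedEgf (hμ : 0 < μ) (hρ : 0 < ρ) (hρp : ρ < p)
    (hc : c =O[atTop] fun k => ρ ^ k) :
    IntegrableOn (fun x => x ^ (μ - 1) * dampedEgf p c x) (Set.Ioi 0) := by
  obtain ⟨C, hC⟩ := exists_abs_egf_le hρ hc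
  have hcont : Continuous (dampedEgf p c) :=
    continuous_iff_continuousAt.2 fun x => (hasDerivAt_dampedEgf p hc x).continuousAt
  refine ((integrableOn_rpow_mul_exp_neg_mul (sub_pos.2 hρp) hμ).const_mul C).mono'
    (by fun_prop) (ae_restrict_of_forall_mem measurableSet_Ioi fun x hx => ?_)
  have hx₀ : 0 < x := hx
  rw [dampedEgf, norm_mul, norm_mul, norm_of_nonneg (by positivity : 0 ≤ x ^ (μ - 1)),
    norm_of_nonneg (exp_pos _).le, norm_eq_abs]
  calc x ^ (μ - 1) * (exp (-(p * x)) * |egf c x|)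
      ≤ x ^ (μ - 1) * (exp (-(p * x)) * (C * exp (ρ * x))) := by gcongr; exact hC x hx₀.le
    _ = C * (x ^ (μ - 1) * exp (-((p - ρ) * x))) := by
      rw [show -((p - ρ) * x) = -(p * x) + ρ * x by ring, exp_add]; ring

lemma integral_rpow_natCast_add_mul_exp_neg_mul (hp : 0 < p) (hμ : 0 < μ) (k : ℕ) :
    ∫ x in Set.Ioi (0 : ℝ), x ^ (k + μ - 1) * exp (-(p * x)) =
      Gamma μ * p ^ (-μ) * (poch μ k / p ^ k) := by
  have hne (m : ℕ) : μ ≠ -m := by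
    have := m.cast_nonneg (α := ℝ); linarith
  rw [integral_rpow_mul_exp_neg_mul_Ioi (by positivity) hp, Gamma_natCast_add hne, one_div,
    inv_rpow hp.le, add_comm, rpow_add_natCast hp.ne', rpow_neg hp.le]
  field_simp

lemma integral_rpow_mul_dampedEgf (hμ : 0 < μ) (hρ : 0 < ρ) (hρp : ρ < p)
    (hc : c =O[atTop] fun k => ρ ^ k) :
    ∫ x in Set.Ioi 0, x ^ (μ - 1) * dampedEgf p c x = Gamma μ * regMellin p c μ := by
  have hp : 0 < p := hρ.trans hρp
  set g : ℕ → ℝ → ℝ := fun k x => x ^ (k + μ - 1) * exp (-(p * x))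
  have hg (k : ℕ) : IntegrableOn (g k) (Set.Ioi 0) :=
    integrableOn_rpow_mul_exp_neg_mul hp (by positivity)
  have hterms : ∀ x ∈ Set.Ioi (0 : ℝ),
      x ^ (μ - 1) * dampedEgf p c x = ∑' k, c k / k ! * g k x := fun x hx => by
    rw [dampedEgf, egf, ← tsum_mul_left, ← tsum_mul_left]
    refine tsum_congr fun k => ?_
    simp only [g]
    rw [add_sub_assoc, add_comm (k : ℝ), rpow_add_natCast (ne_of_gt hx)]
    ring
  have hnorm (k : ℕ) : ∫ x in Set.Ioi 0, ‖c k / k ! * g k x‖ =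
      Gamma μ * p ^ (-μ) * ‖c k * (poch μ k / k !) / p ^ k‖ := by
    have hpoch : 0 ≤ poch μ k := Finset.prod_nonneg fun i _ => by positivity
    simp_rw [norm_mul (c k / _)]
    rw [integral_const_mul, setIntegral_congr_fun (g := g k) measurableSet_Ioi fun x hx =>
      norm_of_nonneg (mul_nonneg (rpow_nonneg (le_of_lt hx) _) (exp_pos _).le),
      integral_rpow_natCast_add_mul_exp_neg_mul hp hμ, norm_div, norm_div, norm_mul, norm_div,
      norm_of_nonneg hpoch, norm_natCast, norm_of_nonneg (pow_nonneg hp.le k)]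
    ring
  have hsum := hasSum_integral_of_summable_integral_norm
    (fun k => (hg k).const_mul (c k / k !)) (by
      simp_rw [hnorm]; exact (summable_regMellin hρ hρp hc μ).norm.mul_left _)
  rw [setIntegral_congr_fun measurableSet_Ioi hterms, ← hsum.tsum_eq, regMellin, ← mul_assoc,
    ← tsum_mul_left]
  refine tsum_congr fun k => ?_
  rw [integral_const_mul, integral_rpow_natCast_add_mul_exp_neg_mul hp hμ]
  ring

end Mellin

section ThirdDerivative

lemma iterate_deriv_three_comp_sq {f f₁ f₂ f₃ : ℝ → ℝ} (h₁ : ∀ x, HasDerivAt f (f₁ x) x)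
    (h₂ : ∀ x, HasDerivAt f₁ (f₂ x) x) (h₃ : ∀ x, HasDerivAt f₂ (f₃ x) x) :
    deriv^[3] (fun b => f (b ^ 2)) = fun b => 12 * b * f₂ (b ^ 2) + 8 * b ^ 3 * f₃ (b ^ 2) := by
  have hsq (b : ℝ) : HasDerivAt (fun b : ℝ => b ^ 2) (2 * b) b := by simpa using hasDerivAt_pow 2 b
  have hcomp {g g' : ℝ → ℝ} (hg : ∀ x, HasDerivAt g (g' x) x) (b : ℝ) :
      HasDerivAt (fun b => g (b ^ 2)) (g' (b ^ 2) * (2 * b)) b := (hg _).comp b (hsq b)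
  have hderiv₁ : deriv (fun b => f (b ^ 2)) = fun b => 2 * b * f₁ (b ^ 2) :=
    funext fun b => (hcomp h₁ b).deriv.trans (by ring)
  have hderiv₂ : deriv (fun b => 2 * b * f₁ (b ^ 2)) =
      fun b => 2 * f₁ (b ^ 2) + 4 * b ^ 2 * f₂ (b ^ 2) := funext fun b =>
    (((hasDerivAt_id b).const_mul 2).mul (hcomp h₂ b)).deriv.trans (by simp only [id]; ring)
  have hderiv₃ : deriv (fun b => 2 * f₁ (b ^ 2) + 4 * b ^ 2 * f₂ (b ^ 2)) =
      fun b => 12 * b * f₂ (b ^ 2) + 8 * b ^ 3 * f₃ (b ^ 2) := funext fun b =>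
    (((hcomp h₂ b).const_mul 2).add (((hsq b).const_mul 4).mul (hcomp h₃ b))).deriv.trans (by ring)
  simp only [Function.iterate_succ, Function.iterate_zero, Function.comp_apply, id, hderiv₁,
    hderiv₂, hderiv₃]

lemma integral_rpow_mul_comp_sq (δ : ℝ) (g₂ g₃ : ℝ → ℝ) :
    ∫ b in Set.Ioi (0 : ℝ), b ^ (δ - 1) * (12 * b * g₂ (b ^ 2) + 8 * b ^ 3 * g₃ (b ^ 2)) =
      ∫ x in Set.Ioi (0 : ℝ), (6 * (x ^ ((δ + 1) / 2 - 1) * g₂ x) +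
        4 * (x ^ ((δ + 1) / 2 + 1 - 1) * g₃ x)) := by
  refine Eq.trans ?_ (integral_comp_rpow_Ioi_of_pos two_pos)
  refine setIntegral_congr_fun measurableSet_Ioi fun b hb => ?_
  have hb₀ : 0 < b := hb
  have hpow₁ : (b ^ 2) ^ ((δ + 1) / 2 - 1) = b ^ (δ - 1) := by
    rw [← rpow_natCast, ← rpow_mul hb₀.le]; push_cast; ring_nf
  have hpow₂ : (b ^ 2) ^ ((δ + 1) / 2 + 1 - 1) = b ^ (δ - 1) * b ^ 2 := by
    rw [← hpow₁, ← rpow_add_one (by positivity)]; ring_nf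
  simp only [rpow_two, smul_eq_mul, hpow₁, hpow₂, show (2 : ℝ) - 1 = 1 by norm_num, rpow_one]
  ring

theorem integral_rpow_mul_iterate_deriv_three_dampedEgf_sq {c : ℕ → ℝ} {δ p ρ : ℝ} (hδ : -1 < δ)
    (hρ : 0 < ρ) (hρp : ρ < p) (hc : c =O[atTop] fun k => ρ ^ k) :
    ∫ b in Set.Ioi (0 : ℝ), b ^ (δ - 1) * deriv^[3] (fun b => dampedEgf p c (b ^ 2)) b =
      -2 * (δ - 2) * Gamma ((δ + 1) / 2) * regMellin p c ((δ - 3) / 2) := by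
  have hc₁ := isBigO_dampedShift p hc
  have hc₂ := isBigO_dampedShift p hc₁
  have hc₃ := isBigO_dampedShift p hc₂
  have hμ : 0 < (δ + 1) / 2 := by linarith
  have hμ₁ : 0 < (δ + 1) / 2 + 1 := by linarith
  have hparts : regMellin p (dampedShift p (dampedShift p c)) ((δ + 1) / 2) =
      regMellin p c ((δ - 3) / 2) := by
    rw [show (δ + 1) / 2 = (δ - 3) / 2 + 1 + 1 by ring, regMellin_add_one_dampedShift hρ hρp hc₁,
      regMellin_add_one_dampedShift hρ hρp hc, neg_neg]
  rw [iterate_deriv_three_comp_sq (hasDerivAt_dampedEgf p hc) (hasDerivAt_dampedEgf p hc₁)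
      (hasDerivAt_dampedEgf p hc₂), integral_rpow_mul_comp_sq,
    integral_add ((integrableOn_rpow_mul_dampedEgf hμ hρ hρp hc₂).const_mul 6)
      ((integrableOn_rpow_mul_dampedEgf hμ₁ hρ hρp hc₃).const_mul 4),
    integral_const_mul, integral_const_mul, integral_rpow_mul_dampedEgf hμ hρ hρp hc₂,
    integral_rpow_mul_dampedEgf hμ₁ hρ hρp hc₃, regMellin_add_one_dampedShift hρ hρp hc₂,
    Gamma_add_one hμ.ne', hparts]
  ring

end ThirdDerivative

section Sigma

/-- The coefficients `(a)ₖ / (c)ₖ qᵏ` of the Kummer function `₁F₁(a, c, q x)`, as an exponential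
generating function. -/
noncomputable def kummerCoeff (a c q : ℝ) (k : ℕ) : ℝ := poch a k / poch c k * q ^ k

lemma isBigO_kummerCoeff (a c : ℝ) {q ρ : ℝ} (hq : 0 < q) (hqρ : q < ρ) :
    kummerCoeff a c q =O[atTop] fun k => ρ ^ k := by
  refine ((isBigO_poch_div_poch a c ((one_lt_div hq).2 hqρ)).mul
    (isBigO_refl (fun k => q ^ k) atTop)).congr (fun _ => rfl) fun k => ?_
  rw [← mul_pow, div_mul_cancel₀ _ hq.ne']

lemma regMellin_kummerCoeff (p a c q μ : ℝ) :
    regMellin p (kummerCoeff a c q) μ = p ^ (-μ) * hyp2F1 a μ c (q / p) := by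
  rw [regMellin, hyp2F1]
  congr 1
  refine tsum_congr fun k => ?_
  simp only [kummerCoeff, div_eq_mul_inv, mul_inv]
  ring

/-- The factor of `SigmaRS δ r s b` which depends neither on `b` nor on the summation index, in the
case `s < r`. -/
noncomputable def sigmaPrefactor (δ r s : ℝ) : ℝ :=
  ((2 : ℝ) ^ (δ / 2 - 1) * (r * (1 - r)) ^ (δ / 2))⁻¹ *
    ((2 * (r - s)) ^ (1 / 2 : ℝ) * (s / r) ^ (1 / 2 : ℝ))

lemma Ccoef_eq_poch_div_poch {δ : ℝ} (hδ : ∀ m : ℕ, δ ≠ -m) (k : ℕ) :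
    Ccoef δ k = Gamma ((δ + 1) / 2) / Gamma (δ / 2) ^ 2 *
      (poch ((δ + 1) / 2) k / poch (δ / 2) k) / k ! := by
  have hα (m : ℕ) : (δ + 1) / 2 ≠ -m := fun h => hδ (2 * m + 1) (by push_cast; linarith)
  have hγ (m : ℕ) : δ / 2 ≠ -m := fun h => hδ (2 * m) (by push_cast; linarith)
  rw [Ccoef, Gamma_natCast_add hα, Gamma_natCast_add hγ]
  simp only [div_eq_mul_inv, mul_inv, sq]
  ring

lemma fcoef_of_lt {s r : ℝ} (hs : 0 < s) (hsr : s < r) (k : ℕ) :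
    fcoef s r k = (2 * (r - s)) ^ (1 / 2 : ℝ) * (s / r) ^ (1 / 2 : ℝ) *
      (s / (2 * r * (r - s))) ^ k := by
  have hr : 0 < r := hs.trans hsr
  have hrs : 0 < r - s := sub_pos.2 hsr
  rw [fcoef, if_pos hsr, rpow_sub_natCast (by positivity), add_comm,
    rpow_add_natCast (by positivity),
    show s / (2 * r * (r - s)) = s / r / (2 * (r - s)) by field_simp, div_pow (s / r)]
  ring

lemma SigmaRS_eq_dampedEgf {δ s r : ℝ} (hδ : ∀ m : ℕ, δ ≠ -m) (hs : 0 < s) (hsr : s < r) :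
    SigmaRS δ r s = fun b => dampedEgf (Dcoef s r / 2)
      (fun k => sigmaPrefactor δ r s * (Gamma ((δ + 1) / 2) / Gamma (δ / 2) ^ 2) *
        kummerCoeff ((δ + 1) / 2) (δ / 2) (s / (2 * r * (r - s))) k) (b ^ 2) := by
  funext b
  rw [SigmaRS, dampedEgf, egf, ← tsum_mul_left, ← tsum_mul_left,
    show -(Dcoef s r / 2 * b ^ 2) = -(Dcoef s r) * b ^ 2 / 2 by ring]
  refine tsum_congr fun k => ?_
  rw [Ccoef_eq_poch_div_poch hδ, fcoef_of_lt hs hsr, sigmaPrefactor, kummerCoeff, pow_mul]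
  ring

lemma sigmaPrefactor_mul_rpow (δ : ℝ) {s r : ℝ} (hs : 0 < s) (hsr : s < r) (hr : r < 1) :
    sigmaPrefactor δ r s * (Dcoef s r / 2) ^ (-((δ - 3) / 2)) =
      (r - s) ^ (δ / 2 - 1) * s ^ ((1 : ℝ) / 2) * (1 - r) ^ (-(3 : ℝ) / 2) *
        r ^ (-((δ + 1) / 2)) * (1 - s) ^ ((3 - δ) / 2) := by
  have hr₀ : 0 < r := hs.trans hsr
  have hrs : 0 < r - s := sub_pos.2 hsr
  have h1r : 0 < 1 - r := sub_pos.2 hr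
  have h1s : 0 < 1 - s := sub_pos.2 (hsr.trans hr)
  rw [sigmaPrefactor, Dcoef, if_pos hsr, div_div, mul_rpow hr₀.le h1r.le,
    mul_rpow two_pos.le hrs.le, div_rpow hs.le hr₀.le, div_rpow h1s.le (by positivity),
    mul_rpow (by positivity) two_pos.le, mul_rpow hrs.le h1r.le]
  simp only [rpow_def_of_pos hs, rpow_def_of_pos hr₀, rpow_def_of_pos hrs, rpow_def_of_pos h1r,
    rpow_def_of_pos h1s, rpow_def_of_pos two_pos, div_eq_mul_inv, ← exp_neg, ← exp_add]
  ring_nf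

theorem integral_third_derivative_sigma_general {δ s r : ℝ} (hδ : -1 < δ) (hδ₀ : δ ≠ 0)
    (hs : 0 < s) (hsr : s < r) (hr : r < 1) :
    (∫ b in Set.Ioi (0 : ℝ), b ^ (δ - 1) * deriv^[3] (SigmaRS δ r s) b)
      = -(δ - 2) * Kcoef δ * (r - s) ^ (δ / 2 - 1) * s ^ ((1 : ℝ) / 2) *
          (1 - r) ^ (-(3 : ℝ) / 2) * r ^ (-((δ + 1) / 2)) * (1 - s) ^ ((3 - δ) / 2) *
          hyp2F1 ((δ + 1) / 2) ((δ - 3) / 2) (δ / 2) (s * (1 - r) / (r * (1 - s))) := by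
  have hr₀ : 0 < r := hs.trans hsr
  have hrs : 0 < r - s := sub_pos.2 hsr
  have h1r : 0 < 1 - r := sub_pos.2 hr
  have h1s : 0 < 1 - s := sub_pos.2 (hsr.trans hr)
  have hδm : ∀ m : ℕ, δ ≠ -m := by
    rintro (_ | m) h
    · exact hδ₀ (by simpa using h)
    · push_cast at h
      linarith [m.cast_nonneg (α := ℝ)]
  set q := s / (2 * r * (r - s)) with hq_def
  have hq : 0 < q := by positivity
  have hp : 0 < Dcoef s r / 2 := by rw [Dcoef, if_pos hsr]; positivity
  have hqp : q / (Dcoef s r / 2) = s * (1 - r) / (r * (1 - s)) := by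
    rw [hq_def, Dcoef, if_pos hsr]; field_simp
  have hlt : q < Dcoef s r / 2 := by
    rw [← div_lt_one hp, hqp, div_lt_one (by positivity)]; linarith
  obtain ⟨ρ, hqρ, hρp⟩ := exists_between hlt
  rw [SigmaRS_eq_dampedEgf hδm hs hsr, integral_rpow_mul_iterate_deriv_three_dampedEgf_sq hδ
      (hq.trans hqρ) hρp ((isBigO_kummerCoeff _ _ hq hqρ).const_mul_left _),
    regMellin_const_mul, regMellin_kummerCoeff, hqp, Kcoef]
  linear_combination (-2 * (δ - 2) * Gamma ((δ + 1) / 2) ^ 2 / Gamma (δ / 2) ^ 2 *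
    hyp2F1 ((δ + 1) / 2) ((δ - 3) / 2) (δ / 2) (s * (1 - r) / (r * (1 - s)))) *
    sigmaPrefactor_mul_rpow δ hs hsr hr

end Sigma

theorem integral_third_derivative_sigma (δ : ℝ) (hδ : 0 < δ) (s r : ℝ)
    (hs : 0 < s) (hsr : s < r) (hr : r < 1) :
    (∫ b in Set.Ioi (0:ℝ), b ^ (δ - 1) * deriv^[3] (SigmaRS δ r s) b)
      = -(δ - 2) * Kcoef δ * (r - s) ^ (δ / 2 - 1) * s ^ ((1 : ℝ) / 2) *
          (1 - r) ^ (-(3 : ℝ) / 2) * r ^ (-((δ + 1) / 2)) * (1 - s) ^ ((3 - δ) / 2) *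
          hyp2F1 ((δ + 1) / 2) ((δ - 3) / 2) (δ / 2) (s * (1 - r) / (r * (1 - s))) :=
  integral_third_derivative_sigma_general (by linarith) hδ.ne' hs hsr hr
end
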